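/- Let A>0 and B∈ℝ. (1) If A+B<0, then there exists n₀∈ℕ (depending only on A and B) such that for every integer n≥n₀ the function ζ_n has exactly one zero x_n in (0,1); moreover x_n∈(0,1+(A+B)/(An)), and the sequence n↦x_n is strictly increasing on [n₀,∞). (2) If A+2B≤0, then for every integer n≥1, ζ_n has no zero in (−∞,0]. (3) If A+2B≥0, then for every integer n≥2, ζ_n has no zero in [0,1]. -/

import Mathlib

open MeasureTheory Real Set

/-- Rising factorial (Pochhammer symbol) `(a)_k`. -/
noncomputable def poch (a : ℝ) (k : ℕ) : ℝ := (ascPochhammer ℝ k).eval a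

/-- Gauss hypergeometric function `F(a,b;c;x)`: given by Euler's integral representation
when `c > b > 0` (valid for all `x ∈ (-∞,1]`), and by the defining power series otherwise. -/
noncomputable def hyper (a b c x : ℝ) : ℝ :=
  if b < c ∧ 0 < b then
    Real.Gamma c / (Real.Gamma b * Real.Gamma (c - b)) *
      ∫ t in (0:ℝ)..1, t ^ (b - 1) * (1 - t) ^ (c - b - 1) * (1 - x * t) ^ (-a)
  else
    ∑' k : ℕ, poch a k * poch b k / (poch c k * (Nat.factorial k)) * x ^ k

/-- The coefficient `a_t = (t - √(t²+8))/2`. -/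
noncomputable def aCoef (t : ℝ) : ℝ := (t - Real.sqrt (t ^ 2 + 8)) / 2

/-- The coefficient `b_t = (t + √(t²+8))/2`. -/
noncomputable def bCoef (t : ℝ) : ℝ := (t + Real.sqrt (t ^ 2 + 8)) / 2

/-- `F_t(x) = F(a_t, b_t; t+1; x)`. -/
noncomputable def Fhyp (t x : ℝ) : ℝ := hyper (aCoef t) (bCoef t) (t + 1) x

/-- The dispersion function `ζ_n` associated with the quadratic profile `f₀(r) = Ar² + B`. -/
noncomputable def zetaDisp (A B : ℝ) (n : ℕ) (x : ℝ) : ℝ :=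
  Fhyp n x * (1 - x + (A + 2 * B) / (A * ((n : ℝ) + 1)) * x)
    + ∫ τ in (0:ℝ)..1, Fhyp n (τ * x) * τ ^ n * (-1 + 2 * x * τ)

/-!
Write `F_t` for `Fhyp t`. The hypergeometric equation gives a closed form for the primitive of the
integrand of `ζ_n`, and hence
`(n + 1) ζ_n(x) = F_n(x) (n (1 - x) + (1 + (A + 2 B) / A) x) + x (1 - x) F_n'(x)` for `x < 1`.
For `x < 1` Euler's integral shows `F_t > 0`, `F_t' < 0` and `F_t'' ≤ 0`; by the differential
equation, concavity amounts to `F_t' / F_t ≥ -2 / ((t + 1) (1 - x))` on `(0, 1)`. These signs give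
`ζ_n > 0` in the cases without zeros.

If `A + B < 0`, the zeros of `ζ_n` in `(0, 1)` are the solutions of `Φ_n = m`, where
`Φ_t(x) = (1 - x) (t / x + F_t'(x) / F_t(x))` and `m = -2 (A + B) / A > 0`. As `F_t` is decreasing,
all of them lie to the left of `t / (t + m)`, and there `Φ_t` is strictly decreasing once `t` is
large, because `F_t` is log-concave. The equations for `F_s` and `F_t` make
`x ^ (s + 1) (F_s F_t' - F_s' F_t)` increasing when `s ≤ t`, so `F_t' / F_t` and `Φ_t` increase
with `t`, and therefore so does the solution of `Φ_t = m`.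
-/

/-! ### Euler's integral -/

/-- The integrand of Euler's integral for `F(a,b;c;x)`, as a function of the variable `t`. -/
noncomputable def eulerIntegrand (a b c x t : ℝ) : ℝ :=
  t ^ (b - 1) * (1 - t) ^ (c - b - 1) * (1 - x * t) ^ (-a)

/-- Euler's integral, which is `F(a,b;c;x)` without its normalizing Gamma factors. -/
noncomputable def eulerIntegral (a b c x : ℝ) : ℝ :=
  ∫ t in (0 : ℝ)..1, eulerIntegrand a b c x t

theorem intervalIntegrable_rpow_mul_one_sub_rpow {p q : ℝ} (hp : -1 < p) (hq : -1 < q) :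
    IntervalIntegrable (fun t : ℝ => t ^ p * (1 - t) ^ q) volume 0 1 := by
  have beta := (Complex.betaIntegral_convergent (u := (p + 1 : ℝ)) (v := (q + 1 : ℝ))
    (by rw [Complex.ofReal_re]; linarith) (by rw [Complex.ofReal_re]; linarith)).norm
  refine beta.congr_uIoo fun t ht => ?_
  rw [uIoo_of_le zero_le_one] at ht
  have one_sub_pos : 0 < 1 - t := sub_pos.2 ht.2
  beta_reduce
  rw [norm_mul, ← Complex.ofReal_one, ← Complex.ofReal_sub, ← Complex.ofReal_sub,
    ← Complex.ofReal_sub, Complex.norm_cpow_eq_rpow_re_of_pos ht.1,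
    Complex.norm_cpow_eq_rpow_re_of_pos one_sub_pos]
  simp

theorem one_sub_mul_pos {x t : ℝ} (hx : x < 1) (ht : t ∈ Icc (0 : ℝ) 1) : 0 < 1 - x * t := by
  rcases le_or_gt x 0 with h | h
  · linarith [mul_nonpos_of_nonpos_of_nonneg h ht.1]
  · linarith [mul_le_of_le_one_right h.le ht.2]

theorem one_sub_mul_nonneg {x t : ℝ} (hx : x ≤ 1) (ht : t ∈ Icc (0 : ℝ) 1) : 0 ≤ 1 - x * t := by
  linarith [mul_le_mul_of_nonneg_right hx ht.1, ht.2]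

section EulerIntegral

variable {a b c x : ℝ}

theorem intervalIntegrable_eulerIntegrand (hb : 0 < b) (hbc : b < c) (h : x < 1 ∨ a ≤ 0) :
    IntervalIntegrable (eulerIntegrand a b c x) volume 0 1 := by
  refine (intervalIntegrable_rpow_mul_one_sub_rpow (by linarith) (by linarith)).mul_continuousOn
    (ContinuousOn.rpow_const (by fun_prop) fun t ht => ?_)
  rw [uIcc_of_le zero_le_one] at ht
  exact h.imp (fun hx => (one_sub_mul_pos hx ht).ne') neg_nonneg.2

theorem eulerIntegral_pos (hb : 0 < b) (hbc : b < c) (hx : x < 1) : 0 < eulerIntegral a b c x := by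
  refine intervalIntegral.intervalIntegral_pos_of_pos_on
    (intervalIntegrable_eulerIntegrand hb hbc (.inl hx)) (fun t ht => ?_) one_pos
  have := one_sub_mul_pos hx (Ioo_subset_Icc_self ht)
  have := sub_pos.2 ht.2
  have := ht.1
  unfold eulerIntegrand
  positivity

theorem eulerIntegral_nonneg (hx : x ≤ 1) : 0 ≤ eulerIntegral a b c x := by
  refine intervalIntegral.integral_nonneg zero_le_one fun t ht => ?_
  have := one_sub_mul_nonneg hx ht
  have := sub_nonneg.2 ht.2
  have := ht.1
  unfold eulerIntegrand
  positivity

theorem eulerIntegral_antitoneOn (hb : 0 < b) (hbc : b < c) (ha : a ≤ 0) :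
    AntitoneOn (eulerIntegral a b c) (Iic 1) := by
  intro x _ y hy hxy
  refine intervalIntegral.integral_mono_on zero_le_one
    (intervalIntegrable_eulerIntegrand hb hbc (.inr ha))
    (intervalIntegrable_eulerIntegrand hb hbc (.inr ha)) fun t ht => ?_
  have := one_sub_mul_nonneg hy ht
  have := sub_nonneg.2 ht.2
  have := ht.1
  have := neg_nonneg.2 ha
  unfold eulerIntegrand
  gcongr

theorem eulerIntegrand_add_one {t : ℝ} (ht : t ≠ 0) (h : 0 < 1 - x * t) :
    eulerIntegrand (a + 1) (b + 1) (c + 1) x t = t / (1 - x * t) * eulerIntegrand a b c x t := by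
  have hb : t ^ (b + 1 - 1) = t ^ (b - 1) * t := by
    rw [← rpow_add_one ht, sub_add_cancel, add_sub_cancel_right]
  have ha : (1 - x * t) ^ (-(a + 1)) = (1 - x * t) ^ (-a) / (1 - x * t) := by
    rw [← rpow_sub_one h.ne', neg_add']
  rw [eulerIntegrand, eulerIntegrand, hb, ha, add_sub_add_right_eq_sub]
  ring

theorem hasDerivAt_eulerIntegrand_param {t : ℝ} (ht : t ≠ 0) (h : 0 < 1 - x * t) :
    HasDerivAt (fun y => eulerIntegrand a b c y t)
      (a * eulerIntegrand (a + 1) (b + 1) (c + 1) x t) x := by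
  have base : HasDerivAt (fun y : ℝ => 1 - y * t) (-t) x := by
    simpa using ((hasDerivAt_id x).mul_const t).const_sub 1
  refine ((base.rpow_const (p := -a) (.inl h.ne')).const_mul
    (t ^ (b - 1) * (1 - t) ^ (c - b - 1))).congr_deriv ?_
  rw [eulerIntegrand_add_one ht h, eulerIntegrand, rpow_sub_one h.ne']
  ring

theorem exists_norm_one_sub_mul_rpow_le {l u : ℝ} (hu : u < 1) (r : ℝ) :
    ∃ C, ∀ y ∈ Icc l u, ∀ t ∈ Icc (0 : ℝ) 1, ‖(1 - y * t) ^ r‖ ≤ C := by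
  have cont : ContinuousOn (fun z : ℝ × ℝ => (1 - z.1 * z.2) ^ r) (Icc l u ×ˢ Icc 0 1) :=
    ContinuousOn.rpow_const (by fun_prop) fun z hz =>
      .inl (one_sub_mul_pos (hz.1.2.trans_lt hu) hz.2).ne'
  obtain ⟨C, hC⟩ := (isCompact_Icc.prod isCompact_Icc).exists_bound_of_continuousOn cont
  exact ⟨C, fun y hy t ht => hC (y, t) ⟨hy, ht⟩⟩

theorem hasDerivAt_eulerIntegral (hb : 0 < b) (hbc : b < c) (hx : x < 1) :
    HasDerivAt (eulerIntegral a b c) (a * eulerIntegral (a + 1) (b + 1) (c + 1) x) x := by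
  have hu : (x + 1) / 2 < 1 := by linarith
  have mem_Icc {t : ℝ} (ht : t ∈ uIoc 0 1) : t ∈ Icc (0 : ℝ) 1 := by
    rw [uIoc_of_le zero_le_one] at ht
    exact Ioc_subset_Icc_self ht
  have integrable {y : ℝ} (hy : y < 1) :
      IntervalIntegrable (eulerIntegrand (a + 1) (b + 1) (c + 1) y) volume 0 1 :=
    intervalIntegrable_eulerIntegrand (by linarith) (by linarith) (.inl hy)
  have weight : IntervalIntegrable (fun t : ℝ => t ^ (b + 1 - 1) * (1 - t) ^ (c + 1 - (b + 1) - 1))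
      volume 0 1 := intervalIntegrable_rpow_mul_one_sub_rpow (by linarith) (by linarith)
  obtain ⟨C, hC⟩ := exists_norm_one_sub_mul_rpow_le (l := x - 1) hu (-(a + 1))
  have main := intervalIntegral.hasDerivAt_integral_of_dominated_loc_of_deriv_le
    (F := eulerIntegrand a b c) (s := Icc (x - 1) ((x + 1) / 2))
    (F' := fun y t => a * eulerIntegrand (a + 1) (b + 1) (c + 1) y t)
    (bound := fun t => |a| * (‖t ^ (b + 1 - 1) * (1 - t) ^ (c + 1 - (b + 1) - 1)‖ * C))
    (Icc_mem_nhds (by linarith) (by linarith))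
    (Filter.mem_of_superset (Iio_mem_nhds hx) fun y hy =>
      (intervalIntegrable_eulerIntegrand hb hbc (.inl hy)).def'.aestronglyMeasurable)
    (intervalIntegrable_eulerIntegrand hb hbc (.inl hx))
    ((integrable hx).const_mul a).def'.aestronglyMeasurable
    (.of_forall fun t ht y hy => ?_) ((weight.norm.mul_const C).const_mul |a|)
    (.of_forall fun t ht y hy => ?_)
  · exact main.2.congr_deriv (intervalIntegral.integral_const_mul ..)
  · rw [eulerIntegrand, norm_mul, norm_mul _ ((1 - y * t) ^ _), Real.norm_eq_abs a]
    gcongr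
    exact hC y hy t (mem_Icc ht)
  · rw [uIoc_of_le zero_le_one] at ht
    exact hasDerivAt_eulerIntegrand_param ht.1.ne'
      (one_sub_mul_pos (hy.2.trans_lt hu) (Ioc_subset_Icc_self ht))

theorem deriv_eulerIntegral (hb : 0 < b) (hbc : b < c) (hx : x < 1) :
    deriv (eulerIntegral a b c) x = a * eulerIntegral (a + 1) (b + 1) (c + 1) x :=
  (hasDerivAt_eulerIntegral hb hbc hx).deriv

theorem hasDerivAt_deriv_eulerIntegral (hb : 0 < b) (hbc : b < c) (hx : x < 1) :
    HasDerivAt (deriv (eulerIntegral a b c))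
      (a * ((a + 1) * eulerIntegral (a + 1 + 1) (b + 1 + 1) (c + 1 + 1) x)) x :=
  ((hasDerivAt_eulerIntegral (by linarith) (by linarith) hx).const_mul a).congr_of_eventuallyEq
    (Filter.mem_of_superset (Iio_mem_nhds hx) fun _ hy => deriv_eulerIntegral hb hbc hy)

theorem hasDerivAt_eulerIntegrand {t : ℝ} (ht : t ∈ Ioo (0 : ℝ) 1) (h : 0 < 1 - x * t) :
    HasDerivAt (eulerIntegrand a b c x)
      (((b - 1) / t - (c - b - 1) / (1 - t) + a * x / (1 - x * t)) * eulerIntegrand a b c x t)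
      t := by
  have one_sub_pos : 0 < 1 - t := sub_pos.2 ht.2
  have left : HasDerivAt (fun t : ℝ => t ^ (b - 1)) ((b - 1) * t ^ (b - 1 - 1)) t :=
    hasDerivAt_rpow_const (.inl ht.1.ne')
  have right : HasDerivAt (fun t : ℝ => (1 - t) ^ (c - b - 1))
      (-1 * (c - b - 1) * (1 - t) ^ (c - b - 1 - 1)) t :=
    ((hasDerivAt_id t).const_sub 1).rpow_const (.inl one_sub_pos.ne')
  have outer : HasDerivAt (fun t : ℝ => (1 - x * t) ^ (-a))
      (-x * -a * (1 - x * t) ^ (-a - 1)) t :=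
    HasDerivAt.rpow_const (by simpa using ((hasDerivAt_id t).const_mul x).const_sub 1) (.inl h.ne')
  refine ((left.mul right).mul outer).congr_deriv ?_
  rw [rpow_sub_one ht.1.ne' (b - 1), rpow_sub_one one_sub_pos.ne' (c - b - 1),
    rpow_sub_one h.ne' (-a), eulerIntegrand]
  simp only [Pi.mul_apply]
  ring

/-- The combination of integrands that occurs in the hypergeometric equation is, up to the factor
`-a`, the `t`-derivative of `t ^ b * (1 - t) ^ (c - b) * (1 - x * t) ^ (-a - 1)`. -/
theorem hasDerivAt_eulerIntegrand_add_two {t : ℝ} (ht : t ∈ Ioo (0 : ℝ) 1) (h : 0 < 1 - x * t) :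
    HasDerivAt (fun t => -a * eulerIntegrand (a + 1) (b + 1) (c + 2) x t)
      (x * (1 - x) * (a * (a + 1)) * eulerIntegrand (a + 1 + 1) (b + 1 + 1) (c + 1 + 1) x t
        + (c - (a + b + 1) * x) * a * eulerIntegrand (a + 1) (b + 1) (c + 1) x t
        + -(a * b) * eulerIntegrand a b c x t) t := by
  have one_sub_pos : 0 < 1 - t := sub_pos.2 ht.2
  have ht0 := ht.1.ne'
  have raise : eulerIntegrand (a + 1) (b + 1) (c + 2) x t
      = t * (1 - t) / (1 - x * t) * eulerIntegrand a b c x t := by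
    rw [mul_div_right_comm, mul_right_comm, ← eulerIntegrand_add_one ht0 h, eulerIntegrand,
      eulerIntegrand, show c + 2 - (b + 1) - 1 = c + 1 - (b + 1) - 1 + 1 by ring,
      rpow_add_one one_sub_pos.ne']
    ring
  refine ((hasDerivAt_eulerIntegrand ht h).const_mul (-a)).congr_deriv ?_
  rw [raise, eulerIntegrand_add_one ht0 h, eulerIntegrand_add_one ht0 h]
  have := one_sub_pos.ne'
  have := mul_comm x t ▸ h.ne'
  field_simp
  ring

theorem eulerIntegral_ode (hb : 0 < b) (hbc : b < c) (hx : x < 1) :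
    x * (1 - x) * deriv (deriv (eulerIntegral a b c)) x
      + (c - (a + b + 1) * x) * deriv (eulerIntegral a b c) x
      - a * b * eulerIntegral a b c x = 0 := by
  have int₂ := (intervalIntegrable_eulerIntegrand (a := a + 1 + 1) (b := b + 1 + 1) (c := c + 1 + 1)
    (by linarith) (by linarith) (.inl hx)).const_mul (x * (1 - x) * (a * (a + 1)))
  have int₁ := (intervalIntegrable_eulerIntegrand (a := a + 1) (b := b + 1) (c := c + 1)
    (by linarith) (by linarith) (.inl hx)).const_mul ((c - (a + b + 1) * x) * a)
  have int₀ := (intervalIntegrable_eulerIntegrand (a := a) hb hbc (.inl hx)).const_mul (-(a * b))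
  have cont : ContinuousOn (fun t => -a * eulerIntegrand (a + 1) (b + 1) (c + 2) x t)
      (Icc 0 1) := by
    unfold eulerIntegrand
    refine continuousOn_const.mul (((ContinuousOn.rpow_const (by fun_prop) ?_).mul
      (ContinuousOn.rpow_const (by fun_prop) ?_)).mul (ContinuousOn.rpow_const (by fun_prop) ?_))
    · exact fun _ _ => .inr (by linarith)
    · exact fun _ _ => .inr (by linarith)
    · exact fun t ht => .inl (one_sub_mul_pos hx ht).ne'
  have ftc := intervalIntegral.integral_eq_sub_of_hasDerivAt_of_le zero_le_one cont
    (fun t ht => hasDerivAt_eulerIntegrand_add_two ht (one_sub_mul_pos hx (Ioo_subset_Icc_self ht)))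
    ((int₂.add int₁).add int₀)
  have zero_left : (0 : ℝ) ^ (b + 1 - 1) = 0 := zero_rpow (by linarith)
  have zero_right : (0 : ℝ) ^ (c + 2 - (b + 1) - 1) = 0 := zero_rpow (by linarith)
  rw [intervalIntegral.integral_add (int₂.add int₁) int₀, intervalIntegral.integral_add int₂ int₁,
    intervalIntegral.integral_const_mul, intervalIntegral.integral_const_mul,
    intervalIntegral.integral_const_mul] at ftc
  simp only [eulerIntegrand, sub_self, zero_left, zero_right, mul_zero, zero_mul] at ftc
  rw [deriv_eulerIntegral hb hbc hx, (hasDerivAt_deriv_eulerIntegral hb hbc hx).deriv]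
  unfold eulerIntegral eulerIntegrand
  linear_combination ftc

end EulerIntegral

/-! ### The hypergeometric function -/

section Hyper

variable {a b c x : ℝ}

theorem hyper_eq_const_mul_eulerIntegral (hb : 0 < b) (hbc : b < c) :
    hyper a b c = fun x => Gamma c / (Gamma b * Gamma (c - b)) * eulerIntegral a b c x :=
  funext fun _ => if_pos ⟨hbc, hb⟩

theorem gamma_div_gamma_mul_gamma_pos (hb : 0 < b) (hbc : b < c) :
    0 < Gamma c / (Gamma b * Gamma (c - b)) :=
  div_pos (Gamma_pos_of_pos (hb.trans hbc))
    (mul_pos (Gamma_pos_of_pos hb) (Gamma_pos_of_pos (sub_pos.2 hbc)))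

theorem hyper_pos (hb : 0 < b) (hbc : b < c) (hx : x < 1) : 0 < hyper a b c x := by
  rw [hyper_eq_const_mul_eulerIntegral hb hbc]
  exact mul_pos (gamma_div_gamma_mul_gamma_pos hb hbc) (eulerIntegral_pos hb hbc hx)

theorem hyper_nonneg (hb : 0 < b) (hbc : b < c) (hx : x ≤ 1) : 0 ≤ hyper a b c x := by
  rw [hyper_eq_const_mul_eulerIntegral hb hbc]
  exact mul_nonneg (gamma_div_gamma_mul_gamma_pos hb hbc).le (eulerIntegral_nonneg hx)

theorem hyper_antitoneOn (hb : 0 < b) (hbc : b < c) (ha : a ≤ 0) :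
    AntitoneOn (hyper a b c) (Iic 1) := by
  rw [hyper_eq_const_mul_eulerIntegral hb hbc]
  exact fun _ hx _ hy hxy => mul_le_mul_of_nonneg_left
    (eulerIntegral_antitoneOn hb hbc ha hx hy hxy) (gamma_div_gamma_mul_gamma_pos hb hbc).le

theorem hasDerivAt_hyper (hb : 0 < b) (hbc : b < c) (hx : x < 1) :
    HasDerivAt (hyper a b c) (a * b / c * hyper (a + 1) (b + 1) (c + 1) x) x := by
  rw [hyper_eq_const_mul_eulerIntegral hb hbc,
    hyper_eq_const_mul_eulerIntegral (by linarith) (by linarith)]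
  refine ((hasDerivAt_eulerIntegral hb hbc hx).const_mul _).congr_deriv ?_
  have hc : c ≠ 0 := (hb.trans hbc).ne'
  have := (Gamma_pos_of_pos hb).ne'
  have := (Gamma_pos_of_pos (sub_pos.2 hbc)).ne'
  rw [Gamma_add_one hc, Gamma_add_one hb.ne', add_sub_add_right_eq_sub]
  field_simp

theorem deriv_hyper (hb : 0 < b) (hbc : b < c) (hx : x < 1) :
    deriv (hyper a b c) x = a * b / c * hyper (a + 1) (b + 1) (c + 1) x :=
  (hasDerivAt_hyper hb hbc hx).deriv

theorem hasDerivAt_deriv_hyper (hb : 0 < b) (hbc : b < c) (hx : x < 1) :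
    HasDerivAt (deriv (hyper a b c))
      (a * b / c * ((a + 1) * (b + 1) / (c + 1) * hyper (a + 1 + 1) (b + 1 + 1) (c + 1 + 1) x))
      x :=
  ((hasDerivAt_hyper (by linarith) (by linarith) hx).const_mul _).congr_of_eventuallyEq
    (Filter.mem_of_superset (Iio_mem_nhds hx) fun _ hy => deriv_hyper hb hbc hy)

theorem deriv_hyper_neg (ha : a < 0) (hb : 0 < b) (hbc : b < c) (hx : x < 1) :
    deriv (hyper a b c) x < 0 := by
  rw [deriv_hyper hb hbc hx]
  exact mul_neg_of_neg_of_pos (div_neg_of_neg_of_pos (mul_neg_of_neg_of_pos ha hb) (hb.trans hbc))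
    (hyper_pos (by linarith) (by linarith) hx)

theorem deriv_deriv_hyper_neg (ha : a ∈ Ioo (-1) 0) (hb : 0 < b) (hbc : b < c) (hx : x < 1) :
    deriv (deriv (hyper a b c)) x < 0 := by
  rw [(hasDerivAt_deriv_hyper hb hbc hx).deriv]
  have := hb.trans hbc
  have : 0 < a + 1 := by linarith [ha.1]
  have : 0 < hyper (a + 1 + 1) (b + 1 + 1) (c + 1 + 1) x :=
    hyper_pos (by linarith) (by linarith) hx
  exact mul_neg_of_neg_of_pos (div_neg_of_neg_of_pos (mul_neg_of_neg_of_pos ha.2 hb) ‹0 < c›)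
    (by positivity)

theorem hyper_ode (hb : 0 < b) (hbc : b < c) (hx : x < 1) :
    x * (1 - x) * deriv (deriv (hyper a b c)) x
      + (c - (a + b + 1) * x) * deriv (hyper a b c) x - a * b * hyper a b c x = 0 := by
  rw [hyper_eq_const_mul_eulerIntegral hb hbc]
  simp only [deriv_const_mul_field']
  linear_combination Gamma c / (Gamma b * Gamma (c - b)) * eulerIntegral_ode (a := a) hb hbc hx

end Hyper

/-! ### The functions `F_t` -/

theorem aCoef_add_bCoef (t : ℝ) : aCoef t + bCoef t = t := by
  unfold aCoef bCoef
  ring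

theorem aCoef_mul_bCoef (t : ℝ) : aCoef t * bCoef t = -2 := by
  have := sq_sqrt (show 0 ≤ t ^ 2 + 8 by positivity)
  unfold aCoef bCoef
  linear_combination -this / 4

theorem abs_lt_sqrt_sq_add_eight (t : ℝ) : |t| < √(t ^ 2 + 8) :=
  lt_sqrt_of_sq_lt (by rw [sq_abs]; linarith)

theorem aCoef_neg (t : ℝ) : aCoef t < 0 := by
  have := (le_abs_self t).trans_lt (abs_lt_sqrt_sq_add_eight t)
  unfold aCoef
  linarith

theorem bCoef_pos (t : ℝ) : 0 < bCoef t := by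
  have := (neg_le_abs t).trans_lt (abs_lt_sqrt_sq_add_eight t)
  unfold bCoef
  linarith

theorem aCoef_one : aCoef 1 = -1 := by
  norm_num [aCoef, show √(9 : ℝ) = 3 from sqrt_eq_cases.2 (.inl (by norm_num))]

theorem bCoef_one : bCoef 1 = 2 := by
  linarith [aCoef_add_bCoef 1, aCoef_one]

theorem neg_one_lt_aCoef {t : ℝ} (ht : 1 < t) : -1 < aCoef t := by
  nlinarith [aCoef_add_bCoef t, aCoef_mul_bCoef t, aCoef_neg t, bCoef_pos t]

theorem bCoef_lt {t : ℝ} (ht : 1 < t) : bCoef t < t + 1 := by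
  linarith [aCoef_add_bCoef t, neg_one_lt_aCoef ht]

/-- For `t = 1` Euler's integral diverges, but the hypergeometric series terminates. -/
theorem Fhyp_one : Fhyp 1 = fun x => 1 - x := by
  ext x
  have poch_neg_one {k : ℕ} (hk : k ∉ Finset.range 2) : poch (-1) k = 0 := by
    simpa [poch] using ascPochhammer_eval_neg_coe_nat_of_lt (R := ℝ) (n := k) (k := 1)
      (by simpa using hk)
  rw [Fhyp, hyper, aCoef_one, bCoef_one, if_neg (by norm_num),
    tsum_eq_sum (s := Finset.range 2) fun k hk => by simp [poch_neg_one hk]]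
  simp only [poch, Finset.sum_range_succ, Finset.range_zero, Finset.sum_empty, ascPochhammer_zero,
    ascPochhammer_one, Polynomial.eval_one, Polynomial.eval_X, Nat.factorial_zero,
    Nat.factorial_one, Nat.cast_one]
  ring

section Fhyp

variable {t x : ℝ}

theorem differentiableAt_Fhyp (ht : 1 ≤ t) (hx : x < 1) : DifferentiableAt ℝ (Fhyp t) x := by
  rcases ht.eq_or_lt with rfl | ht
  · rw [Fhyp_one]
    fun_prop
  · exact (hasDerivAt_hyper (bCoef_pos t) (bCoef_lt ht) hx).differentiableAt

theorem differentiableAt_deriv_Fhyp (ht : 1 ≤ t) (hx : x < 1) :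
    DifferentiableAt ℝ (deriv (Fhyp t)) x := by
  rcases ht.eq_or_lt with rfl | ht
  · simp [Fhyp_one]
  · exact (hasDerivAt_deriv_hyper (bCoef_pos t) (bCoef_lt ht) hx).differentiableAt

theorem Fhyp_ode (ht : 1 ≤ t) (hx : x < 1) :
    x * (1 - x) * deriv (deriv (Fhyp t)) x + (t + 1) * (1 - x) * deriv (Fhyp t) x
      + 2 * Fhyp t x = 0 := by
  rcases ht.eq_or_lt with rfl | ht
  · simp only [Fhyp_one, deriv_const_sub_id', deriv_const']
    ring
  · have ode := hyper_ode (a := aCoef t) (bCoef_pos t) (bCoef_lt ht) hx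
    rw [aCoef_add_bCoef, aCoef_mul_bCoef] at ode
    unfold Fhyp
    linear_combination ode

theorem Fhyp_pos (ht : 1 ≤ t) (hx : x < 1) : 0 < Fhyp t x := by
  rcases ht.eq_or_lt with rfl | ht
  · simpa [Fhyp_one] using hx
  · exact hyper_pos (bCoef_pos t) (bCoef_lt ht) hx

theorem Fhyp_nonneg (ht : 1 ≤ t) (hx : x ≤ 1) : 0 ≤ Fhyp t x := by
  rcases ht.eq_or_lt with rfl | ht
  · simpa [Fhyp_one] using hx
  · exact hyper_nonneg (bCoef_pos t) (bCoef_lt ht) hx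

theorem Fhyp_antitoneOn (ht : 1 ≤ t) : AntitoneOn (Fhyp t) (Iic 1) := by
  rcases ht.eq_or_lt with rfl | ht
  · rw [Fhyp_one]
    exact antitone_const_tsub.antitoneOn _
  · exact hyper_antitoneOn (bCoef_pos t) (bCoef_lt ht) (aCoef_neg t).le

theorem deriv_Fhyp_neg (ht : 1 ≤ t) (hx : x < 1) : deriv (Fhyp t) x < 0 := by
  rcases ht.eq_or_lt with rfl | ht
  · simp [Fhyp_one]
  · exact deriv_hyper_neg (aCoef_neg t) (bCoef_pos t) (bCoef_lt ht) hx

theorem deriv_deriv_Fhyp_nonpos (ht : 1 ≤ t) (hx : x < 1) : deriv (deriv (Fhyp t)) x ≤ 0 := by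
  rcases ht.eq_or_lt with rfl | ht
  · simp [Fhyp_one]
  · exact (deriv_deriv_hyper_neg ⟨neg_one_lt_aCoef ht, aCoef_neg t⟩ (bCoef_pos t)
      (bCoef_lt ht) hx).le

theorem neg_two_mul_Fhyp_le (ht : 1 ≤ t) (hx : x ∈ Ico 0 1) :
    -2 * Fhyp t x ≤ (t + 1) * (1 - x) * deriv (Fhyp t) x := by
  have concave : x * (1 - x) * deriv (deriv (Fhyp t)) x ≤ 0 :=
    mul_nonpos_of_nonneg_of_nonpos (mul_nonneg hx.1 (sub_nonneg.2 hx.2.le))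
      (deriv_deriv_Fhyp_nonpos ht hx.2)
  linarith [Fhyp_ode ht hx.2]

end Fhyp

/-! ### Elimination of the integral -/

/-- The function `G` for which `τ ^ (n + 1) * G (τ * x)` is `n + 1` times a primitive of the
integrand of `ζ_n(x)`; see `hasDerivAt_pow_mul_boundaryTerm`. -/
noncomputable def boundaryTerm (t s : ℝ) : ℝ :=
  s * (1 - s) * deriv (Fhyp t) s - (1 - 2 * s) * Fhyp t s

theorem hasDerivAt_boundaryTerm {t s : ℝ} (ht : 1 ≤ t) (hs : s < 1) :
    HasDerivAt (boundaryTerm t) (-((t + 1) * (1 - s) * deriv (Fhyp t) s)) s := by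
  have quad : HasDerivAt (fun s : ℝ => s * (1 - s)) (1 * (1 - s) + s * -1) s :=
    (hasDerivAt_id s).mul ((hasDerivAt_id s).const_sub 1)
  have lin : HasDerivAt (fun s : ℝ => 1 - 2 * s) (-(2 * 1)) s :=
    ((hasDerivAt_id s).const_mul 2).const_sub 1
  refine ((quad.mul (differentiableAt_deriv_Fhyp ht hs).hasDerivAt).sub
    (lin.mul (differentiableAt_Fhyp ht hs).hasDerivAt)).congr_deriv ?_
  linear_combination Fhyp_ode ht hs

theorem hasDerivAt_pow_mul_boundaryTerm {n : ℕ} {x τ : ℝ} (hn : 1 ≤ n) (h : τ * x < 1) :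
    HasDerivAt (fun τ : ℝ => τ ^ (n + 1) * boundaryTerm n (τ * x))
      ((n + 1) * (Fhyp n (τ * x) * τ ^ n * (-1 + 2 * x * τ))) τ := by
  have inner := (hasDerivAt_boundaryTerm (Nat.one_le_cast.2 hn) h).comp τ (hasDerivAt_mul_const x)
  refine ((hasDerivAt_pow (n + 1) τ).mul inner).congr_deriv ?_
  rw [Function.comp_apply, boundaryTerm, add_tsub_cancel_right]
  push_cast
  ring

theorem add_one_mul_integral_zetaDisp {n : ℕ} {x y : ℝ} (hn : 1 ≤ n) (hy : 0 ≤ y)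
    (h : y * x < 1) :
    (n + 1) * ∫ τ in (0 : ℝ)..y, Fhyp n (τ * x) * τ ^ n * (-1 + 2 * x * τ)
      = y ^ (n + 1) * boundaryTerm n (y * x) := by
  have mul_lt_one {τ : ℝ} (hτ : τ ∈ uIcc 0 y) : τ * x < 1 := by
    rw [uIcc_of_le hy] at hτ
    rcases le_total x 0 with hx | hx
    · exact (mul_nonpos_of_nonneg_of_nonpos hτ.1 hx).trans_lt one_pos
    · exact (mul_le_mul_of_nonneg_right hτ.2 hx).trans_lt h
  have cont : ContinuousOn (fun τ : ℝ => Fhyp n (τ * x)) (uIcc 0 y) := fun τ hτ =>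
    ((differentiableAt_Fhyp (Nat.one_le_cast.2 hn) (mul_lt_one hτ)).continuousAt.comp
      (f := fun τ : ℝ => τ * x) (by fun_prop)).continuousWithinAt
  rw [← intervalIntegral.integral_const_mul, intervalIntegral.integral_eq_sub_of_hasDerivAt
    (fun τ hτ => hasDerivAt_pow_mul_boundaryTerm hn (mul_lt_one hτ))
    (ContinuousOn.intervalIntegrable (by fun_prop))]
  simp

section Zeta

variable {A B x : ℝ} {n : ℕ}

theorem add_one_mul_zetaDisp (hA : A ≠ 0) (hn : 1 ≤ n) (hx : x < 1) :
    (n + 1) * zetaDisp A B n x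
      = Fhyp n x * (n * (1 - x) + (1 + (A + 2 * B) / A) * x) + x * (1 - x) * deriv (Fhyp n) x := by
  have integral := add_one_mul_integral_zetaDisp (x := x) hn zero_le_one (by rwa [one_mul])
  rw [one_pow, one_mul, one_mul, boundaryTerm] at integral
  rw [zetaDisp, mul_add, integral]
  field_simp
  ring

theorem zetaDisp_pos_of_nonpos (hA : A ≠ 0) (hAB : (A + 2 * B) / A ≤ 0) (hn : 1 ≤ n)
    (hx : x ≤ 0) : 0 < zetaDisp A B n x := by
  have hx1 : x < 1 := hx.trans_lt one_pos
  have hn' : (1 : ℝ) ≤ n := Nat.one_le_cast.2 hn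
  have coeff_pos : 0 < n * (1 - x) + (1 + (A + 2 * B) / A) * x := by
    nlinarith [mul_nonneg_of_nonpos_of_nonpos hAB hx]
  have deriv_term_nonneg : 0 ≤ x * (1 - x) * deriv (Fhyp n) x :=
    mul_nonneg_of_nonpos_of_nonpos (mul_nonpos_of_nonpos_of_nonneg hx (by linarith))
      (deriv_Fhyp_neg hn' hx1).le
  refine pos_of_mul_pos_right (a := (n : ℝ) + 1) ?_ (by positivity)
  rw [add_one_mul_zetaDisp hA hn hx1]
  exact add_pos_of_pos_of_nonneg (mul_pos (Fhyp_pos hn' hx1) coeff_pos) deriv_term_nonneg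

theorem zetaDisp_pos_of_mem_Ico (hA : A ≠ 0) (hAB : 0 ≤ (A + 2 * B) / A) (hn : 1 ≤ n)
    (hx : x ∈ Ico 0 1) : 0 < zetaDisp A B n x := by
  have hn' : (1 : ℝ) ≤ n := Nat.one_le_cast.2 hn
  have F_pos := Fhyp_pos hn' hx.2
  have one_sub_pos : 0 < 1 - x := sub_pos.2 hx.2
  have bound : -Fhyp n x ≤ (1 - x) * deriv (Fhyp n) x := by
    nlinarith [neg_two_mul_Fhyp_le hn' hx,
      mul_neg_of_pos_of_neg one_sub_pos (deriv_Fhyp_neg hn' hx.2)]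
  refine pos_of_mul_pos_right (a := (n : ℝ) + 1) ?_ (by positivity)
  rw [add_one_mul_zetaDisp hA hn hx.2]
  calc 0 < Fhyp n x * (n * (1 - x)) := by positivity
    _ ≤ Fhyp n x * (n * (1 - x)) + x * (Fhyp n x + (1 - x) * deriv (Fhyp n) x)
        + Fhyp n x * ((A + 2 * B) / A * x) := by
      have := mul_nonneg hx.1 (neg_le_iff_add_nonneg'.1 bound)
      have := mul_nonneg F_pos.le (mul_nonneg hAB hx.1)
      linarith
    _ = _ := by ring

theorem boundaryTerm_three_quarters_nonneg {t : ℝ} (ht : 2 ≤ t) : 0 ≤ boundaryTerm t (3 / 4) := by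
  have neg := deriv_Fhyp_neg (t := t) (x := 3 / 4) (by linarith) (by norm_num)
  have bound := neg_two_mul_Fhyp_le (t := t) (x := 3 / 4) (by linarith) (by norm_num)
  unfold boundaryTerm
  nlinarith

/-- The integrand is negative on `(0, 1 / 2)`. Its integral over `[0, 3 / 4]` is known in closed
form and is nonnegative, while the integrand is positive on `(3 / 4, 1)`. -/
theorem integral_zetaDisp_one_pos (hn : 2 ≤ n) :
    0 < ∫ τ in (0 : ℝ)..1, Fhyp n (τ * 1) * τ ^ n * (-1 + 2 * 1 * τ) := by
  have hn' : (2 : ℝ) ≤ n := Nat.ofNat_le_cast.2 hn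
  have integrable {u v : ℝ} (huv : u ≤ v) (hv : v ≤ 1) : IntervalIntegrable
      (fun τ : ℝ => Fhyp n (τ * 1) * τ ^ n * (-1 + 2 * 1 * τ)) volume u v := by
    have anti : AntitoneOn (Fhyp n) (uIcc u v) :=
      (Fhyp_antitoneOn (by linarith)).mono (uIcc_of_le huv ▸ Icc_subset_Iic_self.trans
        (Iic_subset_Iic.2 hv))
    simp only [mul_one]
    exact (anti.intervalIntegrable.mul_continuousOn (by fun_prop)).mul_continuousOn (by fun_prop)
  have left : 0 ≤ ∫ τ in (0 : ℝ)..3 / 4, Fhyp n (τ * 1) * τ ^ n * (-1 + 2 * 1 * τ) := by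
    refine nonneg_of_mul_nonneg_right (a := (n : ℝ) + 1) ?_ (by positivity)
    rw [add_one_mul_integral_zetaDisp (by lia) (by norm_num) (by norm_num), mul_one]
    exact mul_nonneg (by positivity) (boundaryTerm_three_quarters_nonneg hn')
  have right : 0 < ∫ τ in (3 / 4 : ℝ)..1, Fhyp n (τ * 1) * τ ^ n * (-1 + 2 * 1 * τ) := by
    refine intervalIntegral.intervalIntegral_pos_of_pos_on
      (integrable (by norm_num) le_rfl) (fun τ hτ => ?_) (by norm_num)
    have F_pos : 0 < Fhyp n (τ * 1) := Fhyp_pos (by linarith) (by linarith [hτ.2])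
    have τ_pow_pos : 0 < τ ^ n := pow_pos (by linarith [hτ.1]) n
    have factor_pos : 0 < -1 + 2 * 1 * τ := by linarith [hτ.1]
    positivity
  rw [← intervalIntegral.integral_add_adjacent_intervals (b := 3 / 4)
    (integrable (by norm_num) (by norm_num)) (integrable (by norm_num) le_rfl)]
  exact add_pos_of_nonneg_of_pos left right

theorem zetaDisp_pos_of_mem_Icc (hA : A ≠ 0) (hAB : 0 ≤ (A + 2 * B) / A) (hn : 2 ≤ n)
    (hx : x ∈ Icc 0 1) : 0 < zetaDisp A B n x := by
  rcases hx.2.eq_or_lt with rfl | hx1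
  · refine add_pos_of_nonneg_of_pos (mul_nonneg (Fhyp_nonneg ?_ le_rfl) ?_)
      (integral_zetaDisp_one_pos hn)
    · exact Nat.one_le_cast.2 (by lia)
    · rw [← div_div, sub_self, zero_add]
      positivity
  · exact zetaDisp_pos_of_mem_Ico hA hAB (by lia) ⟨hx.1, hx1⟩

end Zeta

/-! ### Logarithmic derivatives of `F_t` -/

section LogDeriv

variable {s t x : ℝ}

theorem differentiableAt_logDeriv_Fhyp (ht : 1 ≤ t) (hx : x < 1) :
    DifferentiableAt ℝ (logDeriv (Fhyp t)) x :=
  (differentiableAt_deriv_Fhyp ht hx).div (differentiableAt_Fhyp ht hx) (Fhyp_pos ht hx).ne'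

theorem logDeriv_Fhyp_neg (ht : 1 ≤ t) (hx : x < 1) : logDeriv (Fhyp t) x < 0 :=
  div_neg_of_neg_of_pos (deriv_Fhyp_neg ht hx) (Fhyp_pos ht hx)

theorem neg_two_le_mul_logDeriv_Fhyp (ht : 1 ≤ t) (hx : x ∈ Ico 0 1) :
    -2 ≤ (t + 1) * (1 - x) * logDeriv (Fhyp t) x := by
  rw [logDeriv_apply, ← mul_div_assoc, le_div_iff₀ (Fhyp_pos ht hx.2)]
  exact neg_two_mul_Fhyp_le ht hx

theorem deriv_logDeriv_Fhyp_nonpos (ht : 1 ≤ t) (hx : x < 1) :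
    deriv (logDeriv (Fhyp t)) x ≤ 0 := by
  have quotient_rule := ((differentiableAt_deriv_Fhyp ht hx).hasDerivAt.div
    (differentiableAt_Fhyp ht hx).hasDerivAt (Fhyp_pos ht hx).ne').deriv
  rw [logDeriv, quotient_rule]
  refine div_nonpos_of_nonpos_of_nonneg (sub_nonpos.2 ?_) (sq_nonneg _)
  exact (mul_nonpos_of_nonpos_of_nonneg (deriv_deriv_Fhyp_nonpos ht hx) (Fhyp_pos ht hx).le).trans
    (mul_self_nonneg _)

/-- The Wronskian of two functions, used to compare the logarithmic derivatives of `F_s` and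
`F_t`. -/
noncomputable def wronskian (f g : ℝ → ℝ) (x : ℝ) : ℝ :=
  f x * deriv g x - deriv f x * g x

theorem hasDerivAt_rpow_mul_wronskian_Fhyp (hs : 1 ≤ s) (ht : 1 ≤ t) (hx : x ∈ Ico 0 1) :
    HasDerivAt (fun y => y ^ (s + 1) * wronskian (Fhyp s) (Fhyp t) y)
      (x ^ s * ((s - t) * (Fhyp s x * deriv (Fhyp t) x))) x := by
  have hasDeriv {r : ℝ} (hr : 1 ≤ r) := (differentiableAt_Fhyp hr hx.2).hasDerivAt
  have hasDeriv₂ {r : ℝ} (hr : 1 ≤ r) := (differentiableAt_deriv_Fhyp hr hx.2).hasDerivAt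
  have abel : x * (Fhyp s x * deriv (deriv (Fhyp t)) x - deriv (deriv (Fhyp s)) x * Fhyp t x)
      = (s - t) * (Fhyp s x * deriv (Fhyp t) x) - (s + 1) * wronskian (Fhyp s) (Fhyp t) x := by
    refine mul_left_cancel₀ (sub_pos.2 hx.2).ne' ?_
    unfold wronskian
    linear_combination Fhyp s x * Fhyp_ode ht hx.2 - Fhyp t x * Fhyp_ode hs hx.2
  refine ((hasDerivAt_rpow_const (p := s + 1) (.inr (by linarith))).mul
    (((hasDeriv hs).mul (hasDeriv₂ ht)).sub ((hasDeriv₂ hs).mul (hasDeriv ht)))).congr_deriv ?_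
  rw [add_sub_cancel_right, rpow_add_one' hx.1 (by linarith)]
  simp only [Pi.mul_apply, Pi.sub_apply]
  unfold wronskian at abel
  linear_combination x ^ s * abel

theorem wronskian_Fhyp_nonneg (hs : 1 ≤ s) (hst : s ≤ t) (hx : x ∈ Ioo 0 1) :
    0 ≤ wronskian (Fhyp s) (Fhyp t) x := by
  have ht := hs.trans hst
  have hasDeriv {y : ℝ} (hy : y ∈ Ico 0 1) := hasDerivAt_rpow_mul_wronskian_Fhyp hs ht hy
  have mono : MonotoneOn (fun y => y ^ (s + 1) * wronskian (Fhyp s) (Fhyp t) y) (Ico 0 1) := by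
    refine monotoneOn_of_hasDerivWithinAt_nonneg (convex_Ico 0 1)
      (fun y hy => (hasDeriv hy).continuousAt.continuousWithinAt)
      (fun y hy => (hasDeriv (interior_subset hy)).hasDerivWithinAt) fun y hy => ?_
    rw [interior_Ico] at hy
    exact mul_nonneg (rpow_nonneg hy.1.le s) (mul_nonneg_of_nonpos_of_nonpos (sub_nonpos.2 hst)
      (mul_nonpos_of_nonneg_of_nonpos (Fhyp_pos hs hy.2).le (deriv_Fhyp_neg ht hy.2).le))
  have weighted := mono (left_mem_Ico.2 one_pos) (Ioo_subset_Ico_self hx) hx.1.le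
  simp only [zero_rpow (show s + 1 ≠ 0 by linarith), zero_mul] at weighted
  exact nonneg_of_mul_nonneg_right weighted (rpow_pos_of_pos hx.1 _)

theorem logDeriv_Fhyp_le_logDeriv_Fhyp (hs : 1 ≤ s) (hst : s ≤ t) (hx : x ∈ Ioo 0 1) :
    logDeriv (Fhyp s) x ≤ logDeriv (Fhyp t) x := by
  rw [logDeriv_apply, logDeriv_apply,
    div_le_div_iff₀ (Fhyp_pos hs hx.2) (Fhyp_pos (hs.trans hst) hx.2), mul_comm _ (Fhyp s x)]
  exact sub_nonneg.1 (wronskian_Fhyp_nonneg hs hst hx)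

end LogDeriv

/-! ### Zeros in `(0, 1)` -/

/-- The function `Φ_t(x) = (1 - x) (t / x + F_t'(x) / F_t(x))`. On `(0, 1)` the zeros of `ζ_n` are
the points where `Φ_n` equals `-2 (A + B) / A`; see `zetaDisp_eq_zero_iff`. -/
noncomputable def dispersionQuotient (t x : ℝ) : ℝ :=
  (1 - x) * (t / x + logDeriv (Fhyp t) x)

theorem zetaDisp_eq_zero_iff {A B x : ℝ} {n : ℕ} (hA : A ≠ 0) (hn : 1 ≤ n) (hx : x ∈ Ioo 0 1) :
    zetaDisp A B n x = 0 ↔ dispersionQuotient n x = -2 * ((A + B) / A) := by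
  have F_pos : 0 < Fhyp n x := Fhyp_pos (Nat.one_le_cast.2 hn) hx.2
  have hx0 : x ≠ 0 := hx.1.ne'
  have factorization : (n + 1) * zetaDisp A B n x
      = x * Fhyp n x * (dispersionQuotient n x - -2 * ((A + B) / A)) := by
    rw [add_one_mul_zetaDisp hA hn hx.2, dispersionQuotient, logDeriv_apply]
    field_simp
    ring
  calc zetaDisp A B n x = 0 ↔ (n + 1) * zetaDisp A B n x = 0 :=
      (mul_eq_zero_iff_left (by positivity)).symm
    _ ↔ dispersionQuotient n x - -2 * ((A + B) / A) = 0 := by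
      rw [factorization, mul_eq_zero_iff_left (mul_pos hx.1 F_pos).ne']
    _ ↔ dispersionQuotient n x = -2 * ((A + B) / A) := sub_eq_zero

section DispersionQuotient

variable {s t m x y : ℝ}

theorem dispersionQuotient_lt (ht : 1 ≤ t) (hx : x < 1) :
    dispersionQuotient t x < (1 - x) * (t / x) :=
  mul_lt_mul_of_pos_left (add_lt_of_neg_right _ (logDeriv_Fhyp_neg ht hx)) (sub_pos.2 hx)

theorem sub_one_le_dispersionQuotient (ht : 1 ≤ t) (hx : x ∈ Ico 0 1) :
    (1 - x) * (t / x) - 1 ≤ dispersionQuotient t x := by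
  have bound := neg_two_le_mul_logDeriv_Fhyp ht hx
  have neg : (1 - x) * logDeriv (Fhyp t) x < 0 :=
    mul_neg_of_pos_of_neg (sub_pos.2 hx.2) (logDeriv_Fhyp_neg ht hx.2)
  unfold dispersionQuotient
  nlinarith

theorem lt_div_add_of_le_dispersionQuotient (ht : 1 ≤ t) (hm : 0 < m) (hx : x ∈ Ioo 0 1)
    (h : m ≤ dispersionQuotient t x) : x < t / (t + m) := by
  have lt := h.trans_lt (dispersionQuotient_lt ht hx.2)
  rw [← mul_div_assoc, lt_div_iff₀ hx.1] at lt
  rw [lt_div_iff₀ (by linarith)]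
  linarith

theorem hasDerivAt_dispersionQuotient (ht : 1 ≤ t) (hx : x ∈ Ioo 0 1) :
    HasDerivAt (dispersionQuotient t)
      (-(t / x ^ 2) - logDeriv (Fhyp t) x + (1 - x) * deriv (logDeriv (Fhyp t)) x) x := by
  have inv : HasDerivAt (fun y => t / y) (t * -(x ^ 2)⁻¹) x :=
    (hasDerivAt_inv hx.1.ne').const_mul t
  refine (((hasDerivAt_id x).const_sub 1).mul
    (inv.add (differentiableAt_logDeriv_Fhyp ht hx.2).hasDerivAt)).congr_deriv ?_
  have := hx.1.ne'
  simp only [Pi.add_apply, id]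
  field_simp
  ring

theorem dispersionQuotient_strictAntiOn (ht : 1 ≤ t) (hm : 0 < m) (hmt : m ≤ t)
    (hmul : 4 ≤ m * t) : StrictAntiOn (dispersionQuotient t) (Ioo 0 (t / (t + m))) := by
  have right_lt_one : t / (t + m) < 1 := (div_lt_one (by linarith)).2 (by linarith)
  have hasDeriv {x : ℝ} (hx : x ∈ Ioo 0 (t / (t + m))) :=
    hasDerivAt_dispersionQuotient ht ⟨hx.1, hx.2.trans right_lt_one⟩
  refine strictAntiOn_of_hasDerivWithinAt_neg (convex_Ioo _ _)
    (fun x hx => (hasDeriv hx).continuousAt.continuousWithinAt)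
    (fun x hx => (hasDeriv (interior_subset hx)).hasDerivWithinAt) fun x hx => ?_
  rw [interior_Ioo] at hx
  have hx1 := hx.2.trans right_lt_one
  have concave : (1 - x) * deriv (logDeriv (Fhyp t)) x ≤ 0 :=
    mul_nonpos_of_nonneg_of_nonpos (sub_pos.2 hx1).le (deriv_logDeriv_Fhyp_nonpos ht hx1)
  have pole : t ≤ t / x ^ 2 :=
    le_div_self (by linarith) (pow_pos hx.1 2) (pow_le_one₀ hx.1.le hx1.le)
  have slope : -logDeriv (Fhyp t) x < t := by
    have bound := neg_two_le_mul_logDeriv_Fhyp ht ⟨hx.1.le, hx1⟩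
    have gap : m < (1 - x) * (t + m) := by linarith [(lt_div_iff₀ (by linarith)).1 hx.2]
    by_contra! steep
    have steep_bound : (t + 1) * (1 - x) * t ≤ 2 := by
      nlinarith [mul_nonneg (by linarith : 0 ≤ t + 1) (sub_pos.2 hx1).le]
    have too_large : 2 * (t + m) < 2 * (t + m) := by
      calc 2 * (t + m) ≤ 4 * t := by linarith
        _ ≤ m * t * t := by gcongr
        _ ≤ (t + 1) * t * m := by nlinarith
        _ < (t + 1) * t * ((1 - x) * (t + m)) := by gcongr
        _ = (t + 1) * (1 - x) * t * (t + m) := by ring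
        _ ≤ 2 * (t + m) := by gcongr
    exact too_large.false
  linarith

theorem dispersionQuotient_lt_dispersionQuotient (hs : 1 ≤ s) (hst : s < t) (hx : x ∈ Ioo 0 1) :
    dispersionQuotient s x < dispersionQuotient t x :=
  mul_lt_mul_of_pos_left (add_lt_add_of_lt_of_le (div_lt_div_of_pos_right hst hx.1)
    (logDeriv_Fhyp_le_logDeriv_Fhyp hs hst.le hx)) (sub_pos.2 hx.2)

theorem exists_dispersionQuotient_eq (ht : 1 ≤ t) (hm : 0 < m) :
    ∃ x ∈ Ioo 0 1, dispersionQuotient t x = m := by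
  have : 0 < t := by linarith
  have left_pos : 0 < t / (t + (m + 1)) := by positivity
  have right_lt_one : t / (t + m) < 1 := (div_lt_one (by linarith)).2 (by linarith)
  have left_le_right : t / (t + (m + 1)) ≤ t / (t + m) := by
    gcongr
    linarith
  have principal {r : ℝ} (hr : 0 < r) : (1 - t / (t + r)) * (t / (t / (t + r))) = r := by
    field_simp
    ring
  have cont : ContinuousOn (dispersionQuotient t) (Icc (t / (t + (m + 1))) (t / (t + m))) :=
    fun x hx => (hasDerivAt_dispersionQuotient ht
      ⟨left_pos.trans_le hx.1, hx.2.trans_lt right_lt_one⟩).continuousAt.continuousWithinAt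
  have at_left : m ≤ dispersionQuotient t (t / (t + (m + 1))) := by
    have := sub_one_le_dispersionQuotient ht ⟨left_pos.le, left_le_right.trans_lt right_lt_one⟩
    rwa [principal (by linarith), add_sub_cancel_right] at this
  have at_right : dispersionQuotient t (t / (t + m)) ≤ m :=
    ((dispersionQuotient_lt ht right_lt_one).trans_eq (principal hm)).le
  obtain ⟨x, hx, eq⟩ := intermediate_value_Icc' left_le_right cont ⟨at_right, at_left⟩
  exact ⟨x, ⟨left_pos.trans_le hx.1, hx.2.trans_lt right_lt_one⟩, eq⟩

theorem eq_of_dispersionQuotient_eq (ht : 1 ≤ t) (hm : 0 < m) (hmt : m ≤ t) (hmul : 4 ≤ m * t)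
    (hx : x ∈ Ioo 0 1) (hy : y ∈ Ioo 0 1) (hxm : dispersionQuotient t x = m)
    (hym : dispersionQuotient t y = m) : x = y :=
  (dispersionQuotient_strictAntiOn ht hm hmt hmul).injOn
    ⟨hx.1, lt_div_add_of_le_dispersionQuotient ht hm hx hxm.ge⟩
    ⟨hy.1, lt_div_add_of_le_dispersionQuotient ht hm hy hym.ge⟩ (hxm.trans hym.symm)

theorem lt_of_dispersionQuotient_eq (hs : 1 ≤ s) (hst : s < t) (hm : 0 < m) (hmt : m ≤ t)
    (hmul : 4 ≤ m * t) (hx : x ∈ Ioo 0 1) (hy : y ∈ Ioo 0 1) (hxm : dispersionQuotient s x = m)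
    (hym : dispersionQuotient t y = m) : x < y := by
  have ht : 1 ≤ t := hs.trans hst.le
  have lt : m < dispersionQuotient t x :=
    hxm ▸ dispersionQuotient_lt_dispersionQuotient hs hst hx
  exact ((dispersionQuotient_strictAntiOn ht hm hmt hmul).lt_iff_gt
    ⟨hy.1, lt_div_add_of_le_dispersionQuotient ht hm hy hym.ge⟩
    ⟨hx.1, lt_div_add_of_le_dispersionQuotient ht hm hx lt.le⟩).1 (hym.trans_lt lt)

end DispersionQuotient

theorem div_add_le_one_sub {t m : ℝ} (hm : 0 < m) (hmt : m ≤ t) :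
    t / (t + m) ≤ 1 - m / (2 * t) := by
  have ht : 0 < t := hm.trans_le hmt
  calc t / (t + m) = 1 - m / (t + m) := by
        field_simp
        ring
    _ ≤ 1 - m / (2 * t) := by
        gcongr
        linarith

theorem exists_strictMonoOn_zeros_zetaDisp {A B : ℝ} (hA : A ≠ 0) (hAB : (A + B) / A < 0) :
    ∃ n₀ : ℕ, ∃ xseq : ℕ → ℝ,
      (∀ n : ℕ, n₀ ≤ n →
        xseq n ∈ Ioo (0 : ℝ) 1 ∧ zetaDisp A B n (xseq n) = 0 ∧
        (∀ y ∈ Ioo (0 : ℝ) 1, zetaDisp A B n y = 0 → y = xseq n) ∧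
        xseq n < 1 + (A + B) / (A * n)) ∧
      StrictMonoOn xseq (Ici n₀) := by
  set m := -2 * ((A + B) / A) with hm_def
  have hm : 0 < m := by linarith
  obtain ⟨n₀, hn₀⟩ := exists_nat_ge (1 + m + 4 / m)
  have large {n : ℕ} (hn : n₀ ≤ n) : 1 + m + 4 / m ≤ n := hn₀.trans (Nat.cast_le.2 hn)
  have four_div_pos : 0 < 4 / m := by positivity
  have one_le {n : ℕ} (hn : n₀ ≤ n) : (1 : ℝ) ≤ n := by linarith [large hn]
  have m_le {n : ℕ} (hn : n₀ ≤ n) : m ≤ n := by linarith [large hn]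
  have four_le {n : ℕ} (hn : n₀ ≤ n) : 4 ≤ m * n := by
    rw [← div_le_iff₀' hm]
    linarith [large hn]
  have zero_iff {n : ℕ} (hn : n₀ ≤ n) {x : ℝ} (hx : x ∈ Ioo 0 1) :
      zetaDisp A B n x = 0 ↔ dispersionQuotient n x = m :=
    zetaDisp_eq_zero_iff hA (Nat.one_le_cast.1 (one_le hn)) hx
  choose! xseq mem eq using fun (n : ℕ) (hn : n₀ ≤ n) => exists_dispersionQuotient_eq (one_le hn) hm
  refine ⟨n₀, xseq, fun n hn => ⟨mem n hn, (zero_iff hn (mem n hn)).2 (eq n hn), ?_, ?_⟩, ?_⟩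
  · intro y hy hζ
    exact eq_of_dispersionQuotient_eq (one_le hn) hm (m_le hn) (four_le hn) hy (mem n hn)
      ((zero_iff hn hy).1 hζ) (eq n hn)
  · calc xseq n < n / (n + m) :=
          lt_div_add_of_le_dispersionQuotient (one_le hn) hm (mem n hn) (eq n hn).ge
      _ ≤ 1 - m / (2 * n) := div_add_le_one_sub hm (m_le hn)
      _ = 1 + (A + B) / (A * n) := by
          rw [hm_def, ← div_div (A + B)]
          ring
  · intro j hj k hk hjk
    exact lt_of_dispersionQuotient_eq (one_le hj) (Nat.cast_lt.2 hjk) hm (m_le hk) (four_le hk)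
      (mem j hj) (mem k hk) (eq j hj) (eq k hk)

/-! ### The zeros of `ζ_n` -/

theorem zetaDisp_zeros_general (A B : ℝ) (hA : A ≠ 0) :
    ((A + B) / A < 0 →
      ∃ n₀ : ℕ, ∃ xseq : ℕ → ℝ,
        (∀ n : ℕ, n₀ ≤ n →
          xseq n ∈ Ioo (0 : ℝ) 1 ∧ zetaDisp A B n (xseq n) = 0 ∧
          (∀ y ∈ Ioo (0 : ℝ) 1, zetaDisp A B n y = 0 → y = xseq n) ∧
          xseq n < 1 + (A + B) / (A * n)) ∧
        StrictMonoOn xseq (Ici n₀)) ∧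
    ((A + 2 * B) / A ≤ 0 →
      ∀ n : ℕ, 1 ≤ n → ∀ x : ℝ, x ≤ 0 → zetaDisp A B n x ≠ 0) ∧
    (0 ≤ (A + 2 * B) / A →
      ∀ n : ℕ, 2 ≤ n → ∀ x ∈ Icc (0 : ℝ) 1, zetaDisp A B n x ≠ 0) :=
  ⟨exists_strictMonoOn_zeros_zetaDisp hA,
    fun hAB _ hn _ hx => (zetaDisp_pos_of_nonpos hA hAB hn hx).ne',
    fun hAB _ hn _ hx => (zetaDisp_pos_of_mem_Icc hA hAB hn hx).ne'⟩

/-- existence, uniqueness, localization and monotonicity of zeros of `ζ_n` in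
`(0,1)` when `A+B<0`; non-existence of zeros in `(-∞,0]` when `A+2B≤0`; and non-existence of
zeros in `[0,1]` when `A+2B≥0` (for `n ≥ 2`). -/
theorem zetaDisp_zeros (A B : ℝ) (hA : 0 < A) :
    (A + B < 0 →
      ∃ n₀ : ℕ, ∃ xseq : ℕ → ℝ,
        (∀ n : ℕ, n₀ ≤ n →
          xseq n ∈ Ioo (0:ℝ) 1 ∧ zetaDisp A B n (xseq n) = 0 ∧
          (∀ y ∈ Ioo (0:ℝ) 1, zetaDisp A B n y = 0 → y = xseq n) ∧
          xseq n < 1 + (A + B) / (A * n)) ∧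
        StrictMonoOn xseq (Ici n₀)) ∧
    (A + 2 * B ≤ 0 →
      ∀ n : ℕ, 1 ≤ n → ∀ x : ℝ, x ≤ 0 → zetaDisp A B n x ≠ 0) ∧
    (0 ≤ A + 2 * B →
      ∀ n : ℕ, 2 ≤ n → ∀ x ∈ Icc (0:ℝ) 1, zetaDisp A B n x ≠ 0) := by
  simpa [div_lt_iff₀ hA, div_le_iff₀ hA, le_div_iff₀ hA] using zetaDisp_zeros_general A B hA.ne'
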